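/- Let d ≥ 2 and let C = hO^d be a convex body with Vol(C) = |det h| = 1. Then the infimum over all unimodular lattices Λ ⊆ K̃^d of CovRad_C(Λ) equals 1/q, and this infimum is attained (for example by Λ = hR^d). -/

import Mathlib

noncomputable section

open scoped Classical

variable (Fq : Type) [Field Fq] [Fintype Fq]

/-- `K̃ = 𝔽_q((x⁻¹))`, realized as formal Laurent series in `t = x⁻¹`. -/
abbrev Kt := LaurentSeries Fq

/-- The element `x` of `K̃` (the inverse of the Laurent series variable). -/
def Kx : Kt Fq := HahnSeries.single (-1 : ℤ) 1

/-- Absolute value `|f| = q^{deg f}`, i.e. `q^{-order f}` in terms of `t = x⁻¹`. -/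
def Kabs (f : Kt Fq) : ℝ := if f = 0 then 0 else (Fintype.card Fq : ℝ) ^ (-f.order)

/-- The ring embedding of `R = 𝔽_q[x]` into `K̃`. -/
def polyK : Polynomial Fq →+* Kt Fq := (Polynomial.aeval (Kx Fq)).toRingHom

/-- Sup norm on `K̃^d`. -/
def vnorm {d : ℕ} (v : Fin d → Kt Fq) : ℝ := ⨆ i, Kabs Fq (v i)

/-- The lattice `g·R^d`. -/
def lattice {d : ℕ} (g : Matrix (Fin d) (Fin d) (Kt Fq)) : Set (Fin d → Kt Fq) :=
  {v | ∃ c : Fin d → Polynomial Fq, v = g.mulVec fun j => polyK Fq (c j)}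

/-- `i`-th successive minimum of `Λ` with respect to a norm `nrm`: the least `r > 0` such that
`Λ` contains `i` linearly independent vectors of norm at most `r`. -/
def minimaN {d : ℕ} (nrm : (Fin d → Kt Fq) → ℝ) (Λ : Set (Fin d → Kt Fq)) (i : ℕ) : ℝ :=
  sInf {r : ℝ | 0 < r ∧ ∃ v : Fin i → Fin d → Kt Fq,
    (∀ j, v j ∈ Λ) ∧ LinearIndependent (Kt Fq) v ∧ ∀ j, nrm (v j) ≤ r}

/-- `i`-th successive minimum with respect to the sup norm. -/
def minima {d : ℕ} (Λ : Set (Fin d → Kt Fq)) (i : ℕ) : ℝ := minimaN Fq (vnorm Fq) Λ i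

/-- Covering radius of `Λ` with respect to the norm `nrm`. -/
def covRad {d : ℕ} (nrm : (Fin d → Kt Fq) → ℝ) (Λ : Set (Fin d → Kt Fq)) : ℝ :=
  ⨆ w : Fin d → Kt Fq, ⨅ u : Λ, nrm (w - u.1)

/-- Length of the shortest nonzero vector of `Λ`. -/
def ell {d : ℕ} (Λ : Set (Fin d → Kt Fq)) : ℝ :=
  sInf {r : ℝ | ∃ v ∈ Λ, v ≠ 0 ∧ vnorm Fq v = r}

/-- `Λ` is well rounded: it contains `d` linearly independent vectors of norm `ℓ(Λ)`. -/
def IsWellRounded {d : ℕ} (Λ : Set (Fin d → Kt Fq)) : Prop :=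
  ∃ v : Fin d → Fin d → Kt Fq, (∀ j, v j ∈ Λ) ∧ LinearIndependent (Kt Fq) v ∧
    ∀ j, vnorm Fq (v j) = ell Fq Λ

/-- The multiplicative "norm" `N(v) = ∏ |v i|`. -/
def Nprod {d : ℕ} (v : Fin d → Kt Fq) : ℝ := ∏ i, Kabs Fq (v i)

/-- The Minkowski function `μ(Λ) = sup_w inf_{u ∈ Λ} N(w - u)`. -/
def mink {d : ℕ} (Λ : Set (Fin d → Kt Fq)) : ℝ :=
  ⨆ w : Fin d → Kt Fq, ⨅ u : Λ, Nprod Fq (w - u.1)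

/-!
Applying `h⁻¹` we may take `C = O^d`, so the lattice is `A R^d` with `A = h⁻¹ g` and `|det A| = 1`.
Suppose its covering radius is less than `1/q`. Then for each `j` some lattice point `A c_j` is at
distance less than `1/q` from `x⁻¹ e_j`. Let `P` be the matrix with columns `c_j`. By the
ultrametric inequality `A P = x⁻¹ I - E` with `|E| < |x⁻¹|` is invertible, and as all its entries
have absolute value at most `1/q`, `|det A| |det P| ≤ q^{-d} < 1`. But `det P` is a nonzero
polynomial, so `|det P| ≥ 1`: a contradiction. Conversely `hR^d` becomes `R^d`, and every Laurent
series is within `1/q` of its polynomial part.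
-/

section NonarchimedeanAbsoluteValue

variable {R S n : Type*} [CommRing R] [IsDomain R] [CommRing S] [LinearOrder S]
  [IsStrictOrderedRing S] [Fintype n] [DecidableEq n] {abv : AbsoluteValue R S}

theorem abv_det_le_pow (hna : IsNonarchimedean abv) {A : Matrix n n R} {r : S}
    (hA : ∀ i j, abv (A i j) ≤ r) : abv A.det ≤ r ^ Fintype.card n := by
  obtain ⟨σ, -, hσ⟩ := hna.finset_image_add_of_nonempty
    (fun σ : Equiv.Perm n => Equiv.Perm.sign σ • ∏ i, A (σ i) i) Finset.univ_nonempty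
  calc abv A.det ≤ abv (Equiv.Perm.sign σ • ∏ i, A (σ i) i) := by rwa [Matrix.det_apply]
    _ = ∏ i, abv (A (σ i) i) := by rw [abv.map_units_int_smul, map_prod]
    _ ≤ ∏ _i : n, r := Finset.prod_le_prod (fun _ _ => abv.nonneg _) fun i _ => hA (σ i) i
    _ = r ^ Fintype.card n := by rw [Finset.prod_const, Finset.card_univ]

theorem det_ne_zero_of_abv_smul_one_sub_lt (hna : IsNonarchimedean abv) {A : Matrix n n R} {a : R}
    (hA : ∀ i j, abv ((a • (1 : Matrix n n R) - A) i j) < abv a) : A.det ≠ 0 := by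
  intro hdet
  obtain ⟨v, hv0, hv⟩ := Matrix.exists_mulVec_eq_zero_iff.2 hdet
  obtain ⟨k, hk⟩ := Function.ne_iff.1 hv0
  have : Nonempty n := ⟨k⟩
  obtain ⟨i, hi⟩ := Finite.exists_max fun i => abv (v i)
  have hvi : 0 < abv (v i) := (abv.pos hk).trans_le (hi k)
  have hfix : a * v i = ∑ j, (a • (1 : Matrix n n R) - A) i j * v j := by
    have := congrFun (Matrix.sub_mulVec (a • 1) A v) i
    rw [hv, sub_zero, Matrix.smul_mulVec, Matrix.one_mulVec] at this
    exact this.symm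
  obtain ⟨j, -, hj⟩ := hna.finset_image_add_of_nonempty
    (fun j => (a • (1 : Matrix n n R) - A) i j * v j) Finset.univ_nonempty
  have hlt : abv (a * v i) < abv (a * v i) := calc
    abv (a * v i) ≤ abv ((a • (1 : Matrix n n R) - A) i j * v j) := by rwa [hfix]
    _ = abv ((a • (1 : Matrix n n R) - A) i j) * abv (v j) := map_mul _ _ _
    _ ≤ abv ((a • (1 : Matrix n n R) - A) i j) * abv (v i) := by gcongr; exact hi j
    _ < abv a * abv (v i) := by gcongr; exact hA i j
    _ = abv (a * v i) := (map_mul _ _ _).symm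
  exact hlt.false

theorem abv_det_le_pow_of_abv_smul_one_sub_lt (hna : IsNonarchimedean abv) {A : Matrix n n R}
    {a : R} (hA : ∀ i j, abv ((a • (1 : Matrix n n R) - A) i j) < abv a) :
    abv A.det ≤ abv a ^ Fintype.card n := by
  refine abv_det_le_pow hna fun i j => ?_
  have hscalar : abv ((a • (1 : Matrix n n R)) i j) ≤ abv a := by
    rw [Matrix.smul_apply, Matrix.one_apply, smul_eq_mul, mul_ite, mul_one, mul_zero]
    split_ifs <;> simp
  calc abv (A i j)
      = abv ((a • (1 : Matrix n n R)) i j + -(a • (1 : Matrix n n R) - A) i j) := by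
        rw [Matrix.sub_apply, neg_sub, add_sub_cancel]
    _ ≤ max (abv ((a • (1 : Matrix n n R)) i j)) (abv (-(a • (1 : Matrix n n R) - A) i j)) :=
      hna _ _
    _ ≤ abv a := max_le hscalar (by rw [abv.map_neg]; exact (hA i j).le)

end NonarchimedeanAbsoluteValue

section Lattice

variable {F : Type} [Field F]

theorem polyK_monomial (n : ℕ) (a : F) :
    polyK F (Polynomial.monomial n a) = HahnSeries.single (-(n : ℤ)) a := by
  have halg : algebraMap F (Kt F) a = HahnSeries.single 0 a := by
    simp [HahnSeries.algebraMap_apply']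
  simp [polyK, Kx, Polynomial.aeval_monomial, HahnSeries.single_pow, halg]

theorem coeff_polyK (p : Polynomial F) (m : ℤ) :
    (polyK F p).coeff m = if m ≤ 0 then p.coeff (-m).toNat else 0 := by
  induction p using Polynomial.induction_on' with
  | add p₁ p₂ h₁ h₂ =>
    rw [map_add, HahnSeries.coeff_add, h₁, h₂]
    split_ifs <;> simp
  | monomial n a =>
    rw [polyK_monomial, HahnSeries.coeff_single, Polynomial.coeff_monomial]
    grind

variable {d : ℕ}

theorem iInf_lattice (φ : (Fin d → Kt F) → ℝ) (g : Matrix (Fin d) (Fin d) (Kt F)) :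
    ⨅ u : lattice F g, φ u =
      ⨅ c : Fin d → Polynomial F, φ (g.mulVec fun j => polyK F (c j)) := by
  have hrange : lattice F g = Set.range fun c : Fin d → Polynomial F =>
      g.mulVec fun j => polyK F (c j) := by
    ext v
    simp [lattice, eq_comm]
  rw [hrange, iInf_range' φ]

theorem covRad_lattice (nrm : (Fin d → Kt F) → ℝ) (g : Matrix (Fin d) (Fin d) (Kt F)) :
    covRad F nrm (lattice F g) =
      ⨆ w, ⨅ c : Fin d → Polynomial F, nrm (w - g.mulVec fun j => polyK F (c j)) :=
  iSup_congr fun w => iInf_lattice (fun u => nrm (w - u)) g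

theorem covRad_comp_mulVec_lattice (nrm : (Fin d → Kt F) → ℝ)
    {B : Matrix (Fin d) (Fin d) (Kt F)} (hB : IsUnit B) (g : Matrix (Fin d) (Fin d) (Kt F)) :
    covRad F (fun v => nrm (B.mulVec v)) (lattice F g) = covRad F nrm (lattice F (B * g)) := by
  simp only [covRad_lattice, Matrix.mulVec_sub, Matrix.mulVec_mulVec]
  exact (Matrix.mulVec_surjective_iff_isUnit.2 hB).iSup_comp
    (g := fun w => ⨅ c : Fin d → Polynomial F, nrm (w - (B * g).mulVec fun j => polyK F (c j)))

end Lattice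

section AbsoluteValue

variable {Fq}

theorem one_lt_card_real : (1 : ℝ) < Fintype.card Fq :=
  mod_cast Fintype.one_lt_card

theorem Kabs_of_ne_zero {f : Kt Fq} (hf : f ≠ 0) :
    Kabs Fq f = (Fintype.card Fq : ℝ) ^ (-f.order) :=
  if_neg hf

theorem Kabs_nonneg (f : Kt Fq) : 0 ≤ Kabs Fq f := by
  unfold Kabs
  split_ifs <;> positivity

theorem Kabs_le_zpow_iff {f : Kt Fq} {k : ℤ} :
    Kabs Fq f ≤ (Fintype.card Fq : ℝ) ^ (-k) ↔ ∀ m < k, f.coeff m = 0 := by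
  rcases eq_or_ne f 0 with rfl | hf
  · simp [Kabs, zpow_nonneg]
  · rw [Kabs_of_ne_zero hf, zpow_le_zpow_iff_right₀ one_lt_card_real, neg_le_neg_iff,
      HahnSeries.le_order_iff_forall hf]

theorem zpow_le_Kabs {f : Kt Fq} {k : ℤ} (hf : f.coeff k ≠ 0) :
    (Fintype.card Fq : ℝ) ^ (-k) ≤ Kabs Fq f := by
  rw [Kabs_of_ne_zero (by rintro rfl; simp at hf)]
  exact zpow_le_zpow_right₀ one_lt_card_real.le
    (neg_le_neg (HahnSeries.order_le_of_coeff_ne_zero hf))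

theorem Kabs_single {k : ℤ} {a : Fq} (ha : a ≠ 0) :
    Kabs Fq (HahnSeries.single k a) = (Fintype.card Fq : ℝ) ^ (-k) := by
  rw [Kabs_of_ne_zero (HahnSeries.single_ne_zero ha), HahnSeries.order_single ha]

theorem isNonarchimedean_Kabs : IsNonarchimedean (Kabs Fq) := by
  intro f g
  rcases eq_or_ne f 0 with rfl | hf
  · simp
  rcases eq_or_ne g 0 with rfl | hg
  · simp
  rcases eq_or_ne (f + g) 0 with hfg | hfg
  · rw [hfg, Kabs, if_pos rfl]
    exact le_max_of_le_left (Kabs_nonneg f)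
  · have := HahnSeries.min_order_le_order_add hfg
    rw [Kabs_of_ne_zero hf, Kabs_of_ne_zero hg, Kabs_of_ne_zero hfg, le_sup_iff]
    simp only [zpow_le_zpow_iff_right₀ one_lt_card_real, neg_le_neg_iff]
    exact min_le_iff.1 this

variable (Fq) in
/-- The absolute value `Kabs` of `K̃` in bundled form, so that the library's results on
nonarchimedean absolute values apply to it. -/
def KabsAbv : AbsoluteValue (Kt Fq) ℝ where
  toFun := Kabs Fq
  map_mul' f g := by
    rcases eq_or_ne f 0 with rfl | hf
    · simp [Kabs]
    rcases eq_or_ne g 0 with rfl | hg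
    · simp [Kabs]
    rw [Kabs_of_ne_zero hf, Kabs_of_ne_zero hg, Kabs_of_ne_zero (mul_ne_zero hf hg),
      HahnSeries.order_mul hf hg, neg_add, zpow_add₀ (by positivity)]
  nonneg' := Kabs_nonneg
  eq_zero' f := by
    refine ⟨fun h => ?_, by rintro rfl; simp [Kabs]⟩
    by_contra hf
    rw [Kabs_of_ne_zero hf] at h
    exact (zpow_pos (by positivity) _).ne' h
  add_le' _ _ := isNonarchimedean_Kabs.add_le Kabs_nonneg

theorem KabsAbv_apply (f : Kt Fq) : KabsAbv Fq f = Kabs Fq f := rfl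

theorem isNonarchimedean_KabsAbv : IsNonarchimedean (KabsAbv Fq) := isNonarchimedean_Kabs

theorem Kabs_polyK {p : Polynomial Fq} (hp : p ≠ 0) :
    Kabs Fq (polyK Fq p) = (Fintype.card Fq : ℝ) ^ p.natDegree := by
  rw [← zpow_natCast, ← neg_neg (p.natDegree : ℤ)]
  refine le_antisymm (Kabs_le_zpow_iff.2 fun m hm => ?_) (zpow_le_Kabs ?_)
  · rw [coeff_polyK, if_pos (by omega), Polynomial.coeff_eq_zero_of_natDegree_lt (by omega)]
  · rw [coeff_polyK, if_pos (by omega)]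
    simpa using hp

theorem one_le_Kabs_polyK {p : Polynomial Fq} (hp : p ≠ 0) : 1 ≤ Kabs Fq (polyK Fq p) := by
  rw [Kabs_polyK hp]
  exact one_le_pow₀ one_lt_card_real.le

theorem exists_Kabs_sub_polyK_le (f : Kt Fq) :
    ∃ p : Polynomial Fq, Kabs Fq (f - polyK Fq p) ≤ (Fintype.card Fq : ℝ)⁻¹ := by
  refine ⟨∑ i ∈ Finset.range ((-f.order).toNat + 1), Polynomial.monomial i (f.coeff (-i)), ?_⟩
  rw [← zpow_neg_one, Kabs_le_zpow_iff]
  intro m hm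
  rw [HahnSeries.coeff_sub, coeff_polyK, if_pos (by omega), Polynomial.finsetSum_coeff]
  simp only [Polynomial.coeff_monomial, Finset.sum_ite_eq']
  split_ifs with hrange
  · rw [show -(((-m).toNat : ℕ) : ℤ) = m by omega, sub_self]
  · rw [Finset.mem_range] at hrange
    rw [HahnSeries.coeff_eq_zero_of_lt_order (by omega), sub_zero]

end AbsoluteValue

section CoveringRadius

variable {Fq} {d : ℕ}

theorem Kabs_le_vnorm (v : Fin d → Kt Fq) (i : Fin d) : Kabs Fq (v i) ≤ vnorm Fq v :=
  le_ciSup (f := fun i => Kabs Fq (v i)) (Set.finite_range _).bddAbove i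

theorem vnorm_nonneg (v : Fin d → Kt Fq) : 0 ≤ vnorm Fq v :=
  Real.iSup_nonneg fun _ => Kabs_nonneg _

theorem vnorm_mulVec_le (A : Matrix (Fin d) (Fin d) (Kt Fq)) (v : Fin d → Kt Fq) :
    vnorm Fq (A.mulVec v) ≤ (⨆ p : Fin d × Fin d, Kabs Fq (A p.1 p.2)) * vnorm Fq v :=
  IsNonarchimedean.iSup_abv_linearMap_apply_le isNonarchimedean_KabsAbv
    (fun p => A p.1 p.2) v

theorem bddBelow_range_vnorm {ι : Type*} (v : ι → Fin d → Kt Fq) :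
    BddBelow (Set.range fun i => vnorm Fq (v i)) :=
  ⟨0, Set.forall_mem_range.2 fun _ => vnorm_nonneg _⟩

theorem iInf_vnorm_sub_lattice_le {A : Matrix (Fin d) (Fin d) (Kt Fq)} (hA : A.det ≠ 0)
    (w : Fin d → Kt Fq) :
    ⨅ c : Fin d → Polynomial Fq, vnorm Fq (w - A.mulVec fun j => polyK Fq (c j)) ≤
      (⨆ p : Fin d × Fin d, Kabs Fq (A p.1 p.2)) * (Fintype.card Fq : ℝ)⁻¹ := by
  choose c hc using fun i => exists_Kabs_sub_polyK_le (A⁻¹.mulVec w i)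
  have hw : w - A.mulVec (fun j => polyK Fq (c j)) =
      A.mulVec (A⁻¹.mulVec w - fun j => polyK Fq (c j)) := by
    rw [Matrix.mulVec_sub, Matrix.mulVec_mulVec, Matrix.mul_nonsing_inv _ hA.isUnit,
      Matrix.one_mulVec]
  refine (ciInf_le (bddBelow_range_vnorm _) c).trans ?_
  rw [hw]
  refine (vnorm_mulVec_le _ _).trans ?_
  gcongr
  · exact Real.iSup_nonneg fun _ => Kabs_nonneg _
  · exact Real.iSup_le hc (by positivity)

theorem covRad_lattice_le {A : Matrix (Fin d) (Fin d) (Kt Fq)} (hA : A.det ≠ 0) :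
    covRad Fq (vnorm Fq) (lattice Fq A) ≤
      (⨆ p : Fin d × Fin d, Kabs Fq (A p.1 p.2)) * (Fintype.card Fq : ℝ)⁻¹ := by
  rw [covRad_lattice]
  exact ciSup_le (iInf_vnorm_sub_lattice_le hA)

theorem covRad_lattice_one_le :
    covRad Fq (vnorm Fq) (lattice Fq (1 : Matrix (Fin d) (Fin d) (Kt Fq))) ≤
      (Fintype.card Fq : ℝ)⁻¹ := by
  refine (covRad_lattice_le (by simp)).trans (mul_le_of_le_one_left (by positivity) ?_)
  refine Real.iSup_le (fun p => ?_) zero_le_one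
  rw [Matrix.one_apply]
  split_ifs
  · exact (map_one (KabsAbv Fq)).le
  · exact (map_zero (KabsAbv Fq)).trans_le zero_le_one

theorem exists_vnorm_sub_lt_of_covRad_lattice_lt {A : Matrix (Fin d) (Fin d) (Kt Fq)}
    (hA : A.det ≠ 0) {r : ℝ} (hr : covRad Fq (vnorm Fq) (lattice Fq A) < r) (w : Fin d → Kt Fq) :
    ∃ c : Fin d → Polynomial Fq, vnorm Fq (w - A.mulVec fun j => polyK Fq (c j)) < r := by
  rw [covRad_lattice] at hr
  refine exists_lt_of_ciInf_lt (lt_of_le_of_lt ?_ hr)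
  exact le_ciSup (f := fun w => ⨅ c : Fin d → Polynomial Fq,
    vnorm Fq (w - A.mulVec fun j => polyK Fq (c j)))
    ⟨_, Set.forall_mem_range.2 (iInf_vnorm_sub_lattice_le hA)⟩ w

theorem Kabs_det_le_Kabs_det_mul_map_polyK (A : Matrix (Fin d) (Fin d) (Kt Fq))
    {P : Matrix (Fin d) (Fin d) (Polynomial Fq)} (hAP : (A * P.map (polyK Fq)).det ≠ 0) :
    Kabs Fq A.det ≤ Kabs Fq (A * P.map (polyK Fq)).det := by
  have hdet : (A * P.map (polyK Fq)).det = A.det * polyK Fq P.det := by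
    rw [Matrix.det_mul, RingHom.map_det, RingHom.mapMatrix_apply]
  have hP : P.det ≠ 0 := fun h => hAP (by rw [hdet, h, map_zero, mul_zero])
  calc Kabs Fq A.det ≤ Kabs Fq A.det * Kabs Fq (polyK Fq P.det) :=
        le_mul_of_one_le_right (Kabs_nonneg _) (one_le_Kabs_polyK hP)
    _ = Kabs Fq (A * P.map (polyK Fq)).det := by rw [hdet]; exact (map_mul (KabsAbv Fq) _ _).symm

theorem zpow_le_covRad_lattice {A : Matrix (Fin d) (Fin d) (Kt Fq)} (k : ℤ)
    (hA : ((Fintype.card Fq : ℝ) ^ (-k)) ^ d < Kabs Fq A.det) :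
    (Fintype.card Fq : ℝ) ^ (-k) ≤ covRad Fq (vnorm Fq) (lattice Fq A) := by
  have hA0 : A.det ≠ 0 := (KabsAbv Fq).pos_iff.1 ((by positivity : (0 : ℝ) ≤ _).trans_lt hA)
  by_contra! hlt
  set t : Kt Fq := HahnSeries.single k 1
  have ht : Kabs Fq t = (Fintype.card Fq : ℝ) ^ (-k) := Kabs_single one_ne_zero
  choose c hc using fun j => exists_vnorm_sub_lt_of_covRad_lattice_lt hA0 hlt (Pi.single j t)
  let M := A * (Matrix.of fun i j => c j i).map (polyK Fq)
  have hclose (i j) : Kabs Fq ((t • (1 : Matrix (Fin d) (Fin d) (Kt Fq)) - M) i j) < Kabs Fq t := by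
    have hcol : (t • (1 : Matrix (Fin d) (Fin d) (Kt Fq)) - M) i j =
        ((Pi.single j t : Fin d → Kt Fq) - A.mulVec fun l => polyK Fq (c j l)) i := by
      simp [M, Matrix.mul_apply, Matrix.mulVec, dotProduct, Matrix.one_apply, Pi.single_apply]
    rw [hcol, ht]
    exact (Kabs_le_vnorm _ i).trans_lt (hc j)
  have hM0 : M.det ≠ 0 := det_ne_zero_of_abv_smul_one_sub_lt isNonarchimedean_KabsAbv hclose
  have hM : Kabs Fq M.det ≤ ((Fintype.card Fq : ℝ) ^ (-k)) ^ d := by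
    simpa only [KabsAbv_apply, ht, Fintype.card_fin] using
      abv_det_le_pow_of_abv_smul_one_sub_lt isNonarchimedean_KabsAbv hclose
  exact hA.not_ge ((Kabs_det_le_Kabs_det_mul_map_polyK A hM0).trans hM)

end CoveringRadius

theorem inf_covRad_convex_body_general {d : ℕ} (hd : d ≠ 0)
    (h : Matrix (Fin d) (Fin d) (Kt Fq)) (hh : h.det ≠ 0) :
    IsLeast {r : ℝ | ∃ g : Matrix (Fin d) (Fin d) (Kt Fq), Kabs Fq g.det = Kabs Fq h.det ∧
        r = covRad Fq (fun v => vnorm Fq (h⁻¹.mulVec v)) (lattice Fq g)}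
      (Fintype.card Fq : ℝ)⁻¹ := by
  have hinv : IsUnit h⁻¹ := Matrix.isUnit_nonsing_inv_iff.2 (h.isUnit_iff_isUnit_det.2 hh.isUnit)
  simp only [covRad_comp_mulVec_lattice (vnorm Fq) hinv]
  have lower (g : Matrix (Fin d) (Fin d) (Kt Fq)) (hg : Kabs Fq g.det = Kabs Fq h.det) :
      (Fintype.card Fq : ℝ)⁻¹ ≤ covRad Fq (vnorm Fq) (lattice Fq (h⁻¹ * g)) := by
    have hdet : Kabs Fq (h⁻¹ * g).det = 1 := by
      simp only [← KabsAbv_apply] at hg ⊢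
      rw [Matrix.det_mul, Matrix.det_nonsing_inv, Ring.inverse_eq_inv', map_mul, hg, ← map_mul,
        inv_mul_cancel₀ hh, map_one]
    rw [← zpow_neg_one]
    refine zpow_le_covRad_lattice 1 ?_
    rw [hdet, zpow_neg_one]
    exact pow_lt_one₀ (by positivity) (inv_lt_one_of_one_lt₀ one_lt_card_real) hd
  refine ⟨⟨h, rfl, (lower h rfl).antisymm ?_⟩, ?_⟩
  · rw [Matrix.nonsing_inv_mul _ hh.isUnit]
    exact covRad_lattice_one_le
  · rintro _ ⟨g, hg, rfl⟩
    exact lower g hg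

/-- For a convex body `C = hO^d` of volume `1`, the infimum of
`CovRad_C(Λ)` over unimodular lattices `Λ` equals `1/q` and is attained. -/
theorem inf_covRad_convex_body {d : ℕ} (hd : 2 ≤ d)
    (h : Matrix (Fin d) (Fin d) (Kt Fq)) (hh : Kabs Fq h.det = 1) :
    IsLeast {r : ℝ | ∃ g : Matrix (Fin d) (Fin d) (Kt Fq), Kabs Fq g.det = 1 ∧
        r = covRad Fq (fun v => vnorm Fq (h⁻¹.mulVec v)) (lattice Fq g)}
      (Fintype.card Fq : ℝ)⁻¹ := by
  have hh0 : h.det ≠ 0 := fun h0 => by simp [h0, Kabs] at hh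
  exact hh ▸ inf_covRad_convex_body_general Fq (by omega) h hh0
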